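/- Let 𝓡 be a finite set of pairwise disjoint closed horizontal and vertical line segments in ℝ² in general position, and let Q be a convex partial transversal of 𝓡 with extreme vertices ℓ, r, u, b (leftmost, rightmost, topmost, bottommost). Then there exists a convex partial transversal Q′ of 𝓡 with the same extreme vertices ℓ, r, u, b, such that every segment of 𝓡 intersected by the upper-left, upper-right, lower-right, or lower-left hull of Q is intersected by the corresponding hull of Q′, every strictly convex vertex on the upper-left hull of Q′ lies on a bottom endpoint of a vertical segment or on a right endpoint of a horizontal segment of 𝓡, every strictly convex vertex on the upper-right hull of Q′ lies on a bottom endpoint of a vertical segment or on a left endpoint of a horizontal segment, every strictly convex vertex on the lower-left hull of Q′ lies on a top endpoint of a vertical segment or on a right endpoint of a horizontal segment, and every strictly convex vertex on the lower-right hull of Q′ lies on a top endpoint of a vertical segment or on a left endpoint of a horizontal segment. -/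

import Mathlib

/-- A closed axis-parallel line segment in the plane, given by its two endpoints:
`p` is the bottom endpoint if the segment is vertical and the left endpoint if it
is horizontal; `q` is the top, resp. right, endpoint. -/
structure HVSeg where
  p : ℝ × ℝ
  q : ℝ × ℝ
  hv : (p.1 = q.1 ∧ p.2 ≤ q.2) ∨ (p.2 = q.2 ∧ p.1 ≤ q.1)

namespace HVSeg

/-- The set of points of the segment. -/
def carrier (s : HVSeg) : Set (ℝ × ℝ) := segment ℝ s.p s.q

/-- The segment is vertical. -/
def IsVert (s : HVSeg) : Prop := s.p.1 = s.q.1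

/-- The segment is horizontal. -/
def IsHoriz (s : HVSeg) : Prop := s.p.2 = s.q.2

end HVSeg

/-- The set of all endpoints of the segments of `R`. -/
def endpointsOf (R : Finset HVSeg) : Set (ℝ × ℝ) := ⋃ s ∈ R, {HVSeg.p s, HVSeg.q s}

/-- General position: no three (distinct) segment endpoints are collinear. -/
def GenPos (R : Finset HVSeg) : Prop :=
  ∀ p q r : ℝ × ℝ, p ∈ endpointsOf R → q ∈ endpointsOf R → r ∈ endpointsOf R →
    p ≠ q → p ≠ r → q ≠ r → ¬ Collinear ℝ ({p, q, r} : Set (ℝ × ℝ))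

/-- A finite set of points is in weakly convex position if each of its points lies
on the boundary line of a closed halfplane containing the whole set. -/
def WeaklyConvexPos (Q : Set (ℝ × ℝ)) : Prop :=
  ∀ q ∈ Q, ∃ a : ℝ × ℝ, ∃ c : ℝ, a ≠ 0 ∧
    (∀ p ∈ Q, a.1 * p.1 + a.2 * p.2 ≤ c) ∧ a.1 * q.1 + a.2 * q.2 = c

/-- A convex partial transversal of `R`: a finite set `Q` of points in weakly
convex position together with an injective assignment `f` of each point of `Q` to
a segment of `R` containing it. -/
structure CPT (R : Finset HVSeg) where
  Q : Finset (ℝ × ℝ)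
  f : ℝ × ℝ → HVSeg
  pos : WeaklyConvexPos ↑Q
  f_mem : ∀ q ∈ Q, f q ∈ R
  f_inj : Set.InjOn f ↑Q
  q_mem : ∀ q ∈ Q, q ∈ (f q).carrier

/-- The upper hull of a planar point set `A`: the points of the convex hull of `A`
that are topmost on their vertical line. -/
def upperHullS (A : Set (ℝ × ℝ)) : Set (ℝ × ℝ) :=
  {p ∈ convexHull ℝ A | ∀ q ∈ convexHull ℝ A, q.1 = p.1 → q.2 ≤ p.2}

/-- The lower hull of a planar point set `A`. -/
def lowerHullS (A : Set (ℝ × ℝ)) : Set (ℝ × ℝ) :=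
  {p ∈ convexHull ℝ A | ∀ q ∈ convexHull ℝ A, q.1 = p.1 → p.2 ≤ q.2}

/-- The upper-left hull: the part of the upper hull between the leftmost vertex
and the topmost vertex `u`. -/
def ULHull (A : Set (ℝ × ℝ)) (u : ℝ × ℝ) : Set (ℝ × ℝ) :=
  {x ∈ upperHullS A | x.1 ≤ u.1}

/-- The upper-right hull: the part of the upper hull between the topmost vertex
`u` and the rightmost vertex. -/
def URHull (A : Set (ℝ × ℝ)) (u : ℝ × ℝ) : Set (ℝ × ℝ) :=
  {x ∈ upperHullS A | u.1 ≤ x.1}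

/-- The lower-left hull: the part of the lower hull between the leftmost vertex
and the bottommost vertex `b`. -/
def LLHull (A : Set (ℝ × ℝ)) (b : ℝ × ℝ) : Set (ℝ × ℝ) :=
  {x ∈ lowerHullS A | x.1 ≤ b.1}

/-- The lower-right hull: the part of the lower hull between the bottommost
vertex `b` and the rightmost vertex. -/
def LRHull (A : Set (ℝ × ℝ)) (b : ℝ × ℝ) : Set (ℝ × ℝ) :=
  {x ∈ lowerHullS A | b.1 ≤ x.1}

/-- `x` is a strictly convex vertex of the upper-left hull (leftmost vertex `l`,
topmost vertex `u`): an extreme point of the convex hull lying on the upper hull,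
strictly between `l` and `u` in `x`-coordinate. -/
def SCV_UL (A : Set (ℝ × ℝ)) (l u x : ℝ × ℝ) : Prop :=
  x ∈ upperHullS A ∧ x ∈ Set.extremePoints ℝ (convexHull ℝ A) ∧ l.1 < x.1 ∧ x.1 < u.1

/-- Strictly convex vertex of the upper-right hull. -/
def SCV_UR (A : Set (ℝ × ℝ)) (u r x : ℝ × ℝ) : Prop :=
  x ∈ upperHullS A ∧ x ∈ Set.extremePoints ℝ (convexHull ℝ A) ∧ u.1 < x.1 ∧ x.1 < r.1

/-- Strictly convex vertex of the lower-left hull. -/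
def SCV_LL (A : Set (ℝ × ℝ)) (l b x : ℝ × ℝ) : Prop :=
  x ∈ lowerHullS A ∧ x ∈ Set.extremePoints ℝ (convexHull ℝ A) ∧ l.1 < x.1 ∧ x.1 < b.1

/-- Strictly convex vertex of the lower-right hull. -/
def SCV_LR (A : Set (ℝ × ℝ)) (b r x : ℝ × ℝ) : Prop :=
  x ∈ lowerHullS A ∧ x ∈ Set.extremePoints ℝ (convexHull ℝ A) ∧ b.1 < x.1 ∧ x.1 < r.1

/-!
Call the lower-left corner of a segment, seen as a degenerate box, its inner endpoint for the
upper-right quadrant, and reflect this notion to the other quadrants. Each of the four quarters of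
the hull of `Q` is replaced by the one spanned by its two extreme vertices and the inner endpoints
that lie in the hull beyond the chord joining these vertices.

If the upper-right hull of `Q` passes through a point `z` of a segment with inner endpoint `e`, then
the box with corners `e` and `z` is contained in the segment and meets the new hull: in `e` if `e`
lies beyond the chord, and in a point of the chord otherwise. A point of this intersection that
maximizes the sum of the coordinates lies on the new upper-right hull.

If `e` is a vertex of the new hull beyond the chord, then no other point of the new hull dominates
`e`, so the segment of `e` contains no other point of the new hull. Vertices can therefore be
assigned distinct segments.
-/

open Set

section Cross

/-- Twice the signed area of the triangle `p q x`: positive when `x` lies to the left of the line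
directed from `p` to `q`. With `p` and `q` the topmost and the rightmost point of a convex set it
detects the points beyond the chord that cuts off the upper-right hull. -/
def cross (p q x : ℝ × ℝ) : ℝ :=
  (q.1 - p.1) * (x.2 - p.2) - (q.2 - p.2) * (x.1 - p.1)

variable {p q r u b l e w x z : ℝ × ℝ}

lemma cross_left (p q : ℝ × ℝ) : cross p q p = 0 := by simp [cross]

lemma cross_right (p q : ℝ × ℝ) : cross p q q = 0 := by rw [cross]; ring

lemma cross_neg (p q x : ℝ × ℝ) : cross (-p) (-q) (-x) = cross p q x := by
  simp only [cross, Prod.fst_neg, Prod.snd_neg]; ring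

lemma cross_lineMap (p q x y : ℝ × ℝ) (t : ℝ) :
    cross p q (AffineMap.lineMap x y t) = AffineMap.lineMap (cross p q x) (cross p q y) t := by
  simp only [cross, AffineMap.fst_lineMap, AffineMap.snd_lineMap, AffineMap.lineMap_apply_ring']
  ring

lemma cross_eq_zero_of_mem_segment (hx : x ∈ segment ℝ p q) : cross p q x = 0 := by
  rw [segment_eq_image_lineMap] at hx
  obtain ⟨t, -, rfl⟩ := hx
  rw [cross_lineMap, cross_left, cross_right, AffineMap.lineMap_same_apply]

lemma mem_convexHull_triple_of_cross (hr : 0 < cross p q r) (hpq : 0 ≤ cross p q x)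
    (hqr : 0 ≤ cross q r x) (hrp : 0 ≤ cross r p x) : x ∈ convexHull ℝ {p, q, r} := by
  have barycentric :
      ∑ i, ![cross q r x / cross p q r, cross r p x / cross p q r, cross p q x / cross p q r] i •
        ![p, q, r] i = x := by
    have hr' := hr.ne'
    simp only [Fin.sum_univ_three, Matrix.cons_val]
    ext <;> simp only [Prod.fst_add, Prod.snd_add, Prod.smul_fst, Prod.smul_snd, smul_eq_mul] <;>
      field_simp <;> simp only [cross] <;> ring
  rw [← barycentric]
  refine (convex_convexHull ℝ _).sum_mem ?_ ?_ ?_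
  · simp only [Finset.mem_univ, forall_const, Fin.forall_fin_succ]
    simpa using ⟨by positivity, by positivity, by positivity⟩
  · simp only [Fin.sum_univ_three, Matrix.cons_val]
    rw [← add_div, ← add_div, div_eq_one_iff_eq hr.ne']
    simp only [cross]
    ring
  · simp only [Finset.mem_univ, forall_const, Fin.forall_fin_succ]
    simpa using ⟨subset_convexHull ℝ _ (by simp), subset_convexHull ℝ _ (by simp),
      subset_convexHull ℝ _ (by simp)⟩

lemma cross_le_cross (hur₁ : u.1 ≤ r.1) (hur₂ : r.2 ≤ u.2) (hew : e ≤ w) :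
    cross u r e ≤ cross u r w := by
  have h₁ := mul_le_mul_of_nonneg_left hew.2 (sub_nonneg.2 hur₁)
  have h₂ := mul_le_mul_of_nonneg_left hew.1 (sub_nonneg.2 hur₂)
  simp only [cross]
  linarith

lemma fst_lt_of_cross_pos (hur₁ : u.1 ≤ r.1) (hur₂ : r.2 ≤ u.2) (he : e.2 ≤ u.2)
    (h : 0 < cross u r e) : u.1 < e.1 := by
  by_contra! hlt
  have := cross_le_cross hur₁ hur₂ (w := u) ⟨hlt, he⟩
  rw [cross_left] at this
  linarith

lemma snd_lt_of_cross_pos (hur₁ : u.1 ≤ r.1) (hur₂ : r.2 ≤ u.2) (he : e.1 ≤ r.1)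
    (h : 0 < cross u r e) : r.2 < e.2 := by
  by_contra! hlt
  have := cross_le_cross hur₁ hur₂ (w := r) ⟨he, hlt⟩
  rw [cross_right] at this
  linarith

lemma mem_convexHull_triple_of_le (hur₁ : u.1 ≤ r.1) (hur₂ : r.2 ≤ u.2) (hw₁ : w.1 ≤ r.1)
    (hw₂ : w.2 ≤ u.2) (he : 0 < cross u r e) (hew : e ≤ w) : e ∈ convexHull ℝ {u, r, w} := by
  have hu := fst_lt_of_cross_pos hur₁ hur₂ (hew.2.trans hw₂) he
  have hr := snd_lt_of_cross_pos hur₁ hur₂ (hew.1.trans hw₁) he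
  obtain ⟨hew₁, hew₂⟩ := hew
  refine mem_convexHull_triple_of_cross (he.trans_le (cross_le_cross hur₁ hur₂ ⟨hew₁, hew₂⟩))
    he.le ?_ ?_ <;> simp only [cross]
  · nlinarith [mul_nonneg (sub_nonneg.2 hew₁) (sub_nonneg.2 (hr.le.trans hew₂)),
      mul_nonneg (sub_nonneg.2 hew₂) (sub_nonneg.2 hw₁)]
  · nlinarith [mul_nonneg (sub_nonneg.2 (hu.le.trans hew₁)) (sub_nonneg.2 hew₂),
      mul_nonneg (sub_nonneg.2 hw₂) (sub_nonneg.2 hew₁)]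

lemma mem_segment_of_cross_eq_zero (hu₁ : u.1 ≤ x.1) (hr₁ : x.1 ≤ r.1) (hr₂ : r.2 ≤ x.2)
    (hu₂ : x.2 ≤ u.2) (h : cross u r x = 0) : x ∈ segment ℝ u r := by
  rcases (add_nonneg (sub_nonneg.2 (hu₁.trans hr₁)) (sub_nonneg.2 (hr₂.trans hu₂))).eq_or_lt
    with hd | hd
  · obtain rfl : x = u := Prod.ext (by linarith) (by linarith)
    exact left_mem_segment ℝ _ _
  · have hd' := hd.ne'
    rw [segment_eq_image_lineMap]
    refine ⟨((x.1 - u.1) + (u.2 - x.2)) / ((r.1 - u.1) + (u.2 - r.2)),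
      ⟨by apply div_nonneg <;> linarith, by rw [div_le_one hd]; linarith⟩, ?_⟩
    simp only [cross] at h
    ext <;> simp only [AffineMap.fst_lineMap, AffineMap.snd_lineMap,
      AffineMap.lineMap_apply_ring'] <;> field_simp <;> linarith

lemma exists_mem_segment_mem_Icc (hz₁ : z.1 ≤ r.1) (hz₂ : z.2 ≤ u.2) (hu : u.1 ≤ z.1)
    (hr : r.2 ≤ z.2) (hez : e ≤ z) (he : cross u r e ≤ 0) (hz : 0 ≤ cross u r z) :
    ∃ c ∈ segment ℝ u r, c ∈ Icc e z := by
  rcases hz.eq_or_lt with hz | hz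
  · exact ⟨z, mem_segment_of_cross_eq_zero hu hz₁ hr hz₂ hz.symm, hez, le_rfl⟩
  have hu' := fst_lt_of_cross_pos (hu.trans hz₁) (hr.trans hz₂) hz₂ hz
  have hr' := snd_lt_of_cross_pos (hu.trans hz₁) (hr.trans hz₂) hz₁ hz
  have hd : 0 < cross u r z - cross u r e := by linarith
  obtain ⟨c, hc, hc0⟩ : ∃ c ∈ segment ℝ e z, cross u r c = 0 := by
    rw [segment_eq_image_lineMap]
    refine ⟨_, mem_image_of_mem _ ⟨div_nonneg (neg_nonneg.2 he) hd.le, ?_⟩, ?_⟩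
    · rw [div_le_one hd]; linarith
    · rw [cross_lineMap, AffineMap.lineMap_apply, smul_eq_mul, vsub_eq_sub, vadd_eq_add,
        div_mul_cancel₀ _ hd.ne', neg_add_cancel]
  obtain ⟨hec, hcz⟩ := segment_subset_Icc hez hc
  have hc₁ := hcz.1.trans hz₁
  have hc₂ := hcz.2.trans hz₂
  have huc : u.1 ≤ c.1 := by
    simp only [cross] at hc0
    by_contra! hlt
    nlinarith
  have hrc : r.2 ≤ c.2 := by
    simp only [cross] at hc0
    by_contra! hlt
    nlinarith
  exact ⟨c, mem_segment_of_cross_eq_zero huc hc₁ hrc hc₂ hc0, hec, hcz⟩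

lemma cross_nonpos_of_le (hl₁ : l.1 ≤ b.1) (hl₂ : b.2 ≤ l.2) (h : l ≤ x ∨ b ≤ x) :
    cross b l x ≤ 0 := by
  rcases h with h | h
  · have := cross_le_cross (u := l) (r := b) hl₁ hl₂ h
    simp only [cross] at *
    linarith
  · have := cross_le_cross (u := l) (r := b) hl₁ hl₂ h
    simp only [cross] at *
    linarith

lemma cross_opposite_nonpos (hlb₁ : l.1 ≤ b.1) (hlb₂ : b.2 ≤ l.2) (hlu : l ≤ u) (hbr : b ≤ r)
    (hx₁ : u.1 < x.1) (hx₂ : x.1 ≤ r.1) (h : 0 ≤ cross u r x) : cross b l x ≤ 0 := by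
  have hu := cross_nonpos_of_le hlb₁ hlb₂ (.inl hlu)
  have hr := cross_nonpos_of_le hlb₁ hlb₂ (.inr hbr)
  have interpolation : (r.1 - u.1) * cross b l x = (r.1 - x.1) * cross b l u +
      (x.1 - u.1) * cross b l r - (b.1 - l.1) * cross u r x := by
    simp only [cross]; ring
  nlinarith [mul_nonneg (sub_nonneg.2 hlb₁) h, mul_nonneg (sub_nonneg.2 hx₂) (neg_nonneg.2 hu),
    mul_nonneg (sub_nonneg.2 hx₁.le) (neg_nonneg.2 hr)]

end Cross

/-- `u` is a topmost and `r` a rightmost point of `A`. Reflections reduce the four quarter hulls to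
the upper-right hull of such a set. -/
structure IsTopRight (A : Set (ℝ × ℝ)) (u r : ℝ × ℝ) : Prop where
  top_mem : u ∈ A
  right_mem : r ∈ A
  le_top : ∀ q ∈ A, q.2 ≤ u.2
  le_right : ∀ q ∈ A, q.1 ≤ r.1

section UpperRight

variable {A A' : Set (ℝ × ℝ)} {u r e c p q v w x z : ℝ × ℝ}

lemma exists_mem_segment_fst_eq {t : ℝ} (ht : t ∈ uIcc p.1 q.1) :
    ∃ v ∈ segment ℝ p q, v.1 = t ∧ v.2 ∈ uIcc p.2 q.2 := by
  rw [← segment_eq_uIcc] at ht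
  obtain ⟨v, hv, hvt⟩ :=
    (image_segment ℝ (LinearMap.fst ℝ ℝ ℝ).toAffineMap p q).superset ht
  exact ⟨v, hv, hvt, (segment_eq_uIcc p.2 q.2).subset (Prod.segment_subset p q hv).2⟩

lemma exists_lineMap_mem_segment (hqw : q.1 = w.1) (hvz : v.1 = z.1) (hq : w.2 < q.2)
    (hv : v.2 ≤ z.2) : ∃ t ∈ Ioc (0 : ℝ) 1, AffineMap.lineMap w z t ∈ segment ℝ q v := by
  have hd : 0 < (q.2 - w.2) + (z.2 - v.2) := by linarith
  have ht : (q.2 - w.2) / ((q.2 - w.2) + (z.2 - v.2)) ∈ Ioc (0 : ℝ) 1 :=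
    ⟨div_pos (by linarith) hd, by rw [div_le_one hd]; linarith⟩
  refine ⟨_, ht, ?_⟩
  rw [segment_eq_image_lineMap]
  refine ⟨_, Ioc_subset_Icc_self ht, ?_⟩
  have hd' := hd.ne'
  ext <;> simp only [AffineMap.fst_lineMap, AffineMap.snd_lineMap, AffineMap.lineMap_apply_ring',
    hqw, hvz]
  field_simp
  ring

namespace IsTopRight

lemma fst_le (h : IsTopRight A u r) : u.1 ≤ r.1 := h.le_right u h.top_mem

lemma snd_le (h : IsTopRight A u r) : r.2 ≤ u.2 := h.le_top r h.right_mem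

protected lemma convexHull (h : IsTopRight A u r) : IsTopRight (convexHull ℝ A) u r where
  top_mem := subset_convexHull ℝ A h.top_mem
  right_mem := subset_convexHull ℝ A h.right_mem
  le_top := fun _ hq ↦ convexHull_min h.le_top
    ((convex_Iic u.2).linear_preimage (LinearMap.snd ℝ ℝ ℝ)) hq
  le_right := fun _ hq ↦ convexHull_min h.le_right
    ((convex_Iic r.1).linear_preimage (LinearMap.fst ℝ ℝ ℝ)) hq

lemma segment_subset (h : IsTopRight A u r) : segment ℝ u r ⊆ convexHull ℝ A :=
  segment_subset_convexHull h.top_mem h.right_mem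

lemma exists_mem_segment_below (h : IsTopRight A u r) (hx : x ∈ URHull A u) :
    ∃ v ∈ segment ℝ u r, v.1 = x.1 ∧ v.2 ∈ Icc r.2 x.2 := by
  obtain ⟨v, hv, hvx, hrv, -⟩ := exists_mem_segment_fst_eq (p := u) (q := r)
    (Icc_subset_uIcc ⟨hx.2, h.convexHull.le_right x hx.1.1⟩)
  exact ⟨v, hv, hvx, (min_eq_right h.snd_le).ge.trans hrv, hx.1.2 v (h.segment_subset hv) hvx⟩

lemma cross_nonneg (h : IsTopRight A u r) (hx : x ∈ URHull A u) : 0 ≤ cross u r x := by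
  obtain ⟨v, hv, hvx, -, hvx₂⟩ := h.exists_mem_segment_below hx
  rw [← cross_eq_zero_of_mem_segment hv]
  exact cross_le_cross h.fst_le h.snd_le ⟨hvx.le, hvx₂⟩

lemma right_snd_le (h : IsTopRight A u r) (hx : x ∈ URHull A u) : r.2 ≤ x.2 := by
  obtain ⟨v, -, -, hrv, hvx⟩ := h.exists_mem_segment_below hx
  exact hrv.trans hvx

lemma cross_pos_of_SCV_UR (h : IsTopRight A u r) (hx : SCV_UR A u r x) : 0 < cross u r x := by
  obtain ⟨hxA, hxe, hux, hxr⟩ := hx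
  have hxUR : x ∈ URHull A u := ⟨hxA, hux.le⟩
  refine (h.cross_nonneg hxUR).lt_of_ne' fun h0 ↦ ?_
  have hxs := mem_segment_of_cross_eq_zero hux.le hxr.le (h.right_snd_le hxUR)
    (h.convexHull.le_top x hxA.1) h0
  rcases (mem_extremePoints_iff_forall_segment.1 hxe).2 u h.convexHull.top_mem r
    h.convexHull.right_mem hxs with rfl | rfl
  exacts [hux.ne rfl, hxr.ne rfl]

/-- Otherwise `e` would be a non-vertex of the triangle `u r w`. -/
lemma eq_of_mem_extremePoints (h : IsTopRight A u r) (he : e ∈ (convexHull ℝ A).extremePoints ℝ)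
    (hbeyond : 0 < cross u r e) (hw : w ∈ convexHull ℝ A) (hew : e ≤ w) : w = e := by
  have htriangle : convexHull ℝ {u, r, w} ⊆ convexHull ℝ A :=
    convexHull_min (by simp [insert_subset_iff, h.convexHull.top_mem, h.convexHull.right_mem, hw])
      (convex_convexHull ℝ A)
  have he' : e ∈ ({u, r, w} : Set (ℝ × ℝ)) :=
    extremePoints_convexHull_subset <| inter_extremePoints_subset_extremePoints_of_subset htriangle
      ⟨mem_convexHull_triple_of_le h.fst_le h.snd_le (h.convexHull.le_right w hw)
        (h.convexHull.le_top w hw) hbeyond hew, he⟩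
  rcases he' with rfl | rfl | rfl
  · exact absurd (cross_left e r) hbeyond.ne'
  · exact absurd (cross_right u e) hbeyond.ne'
  · rfl

lemma exists_mem_URHull_mem_Icc (h : IsTopRight A u r) (hA : IsCompact (convexHull ℝ A))
    (hc : c ∈ convexHull ℝ A) (huc : u.1 ≤ c.1) (hcz : c ≤ z) (hzr : z.1 ≤ r.1) (hrz : r.2 ≤ z.2)
    (hz : z ∈ convexHull ℝ A → z ∈ upperHullS A) : ∃ w ∈ URHull A u, w ∈ Icc c z := by
  -- A point of the hull in the box `Icc c z` maximizing the sum of its coordinates works.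
  obtain ⟨w, ⟨hw, hcw, hwz⟩, hmax⟩ := (hA.inter_right isClosed_Icc).exists_isMaxOn
    ⟨c, hc, left_mem_Icc.2 hcz⟩ (f := fun p : ℝ × ℝ ↦ p.1 + p.2) (by fun_prop)
  refine ⟨w, ⟨⟨hw, fun q hq hqw ↦ ?_⟩, huc.trans hcw.1⟩, hcw, hwz⟩
  by_contra! hlt
  rcases eq_or_ne w z with rfl | hne
  · exact hlt.not_ge ((hz hw).2 q hq hqw)
  obtain ⟨v, hv, hvz, -, hv₂⟩ := exists_mem_segment_fst_eq (p := w) (q := r)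
    (Icc_subset_uIcc ⟨hwz.1, hzr⟩)
  obtain ⟨t, ht, htA⟩ := exists_lineMap_mem_segment hqw hvz hlt (hv₂.trans (max_le hwz.2 hrz))
  have hvA := (convex_convexHull ℝ A).segment_subset hw h.convexHull.right_mem hv
  have hm : AffineMap.lineMap w z t ∈ Icc w z :=
    segment_subset_Icc hwz (segment_eq_image_lineMap ℝ w z ▸
      mem_image_of_mem _ (Ioc_subset_Icc_self ht))
  have hle : (AffineMap.lineMap w z t).1 + (AffineMap.lineMap w z t).2 ≤ w.1 + w.2 :=
    hmax ⟨(convex_convexHull ℝ A).segment_subset hq hvA htA, hcw.trans hm.1, hm.2⟩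
  have hsum : 0 < (z.1 - w.1) + (z.2 - w.2) := by
    refine (add_nonneg (sub_nonneg.2 hwz.1) (sub_nonneg.2 hwz.2)).lt_of_ne' fun h0 ↦ hne ?_
    exact Prod.ext (by linarith [hwz.1, hwz.2]) (by linarith [hwz.1, hwz.2])
  simp only [AffineMap.fst_lineMap, AffineMap.snd_lineMap, AffineMap.lineMap_apply_ring'] at hle
  nlinarith [mul_pos ht.1 hsum]

lemma exists_mem_URHull_mem_Icc_of_subset (h : IsTopRight A u r) (h' : IsTopRight A' u r)
    (hsub : A' ⊆ convexHull ℝ A) (hA' : IsCompact (convexHull ℝ A')) (hz : z ∈ URHull A u)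
    (hez : e ≤ z) (he : e ∈ convexHull ℝ A → 0 < cross u r e → e ∈ convexHull ℝ A') :
    ∃ w ∈ URHull A' u, w ∈ Icc e z := by
  have hsub' : convexHull ℝ A' ⊆ convexHull ℝ A := convexHull_min hsub (convex_convexHull ℝ A)
  have hzr := h.convexHull.le_right z hz.1.1
  have hzu := h.convexHull.le_top z hz.1.1
  obtain ⟨c, hc, huc, hec, hcz⟩ : ∃ c ∈ convexHull ℝ A', u.1 ≤ c.1 ∧ c ∈ Icc e z := by
    rcases lt_or_ge 0 (cross u r e) with hpos | hneg
    · have heA : e ∈ convexHull ℝ A := convexHull_min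
        (by simp [insert_subset_iff, h.convexHull.top_mem, h.convexHull.right_mem, hz.1.1])
        (convex_convexHull ℝ A) (mem_convexHull_triple_of_le h.fst_le h.snd_le hzr hzu hpos hez)
      exact ⟨e, he heA hpos,
        (fst_lt_of_cross_pos h.fst_le h.snd_le (hez.2.trans hzu) hpos).le, le_rfl, hez⟩
    · obtain ⟨c, hc, hc'⟩ := exists_mem_segment_mem_Icc hzr hzu hz.2 (h.right_snd_le hz) hez hneg
        (h.cross_nonneg hz)
      exact ⟨c, h'.segment_subset hc,
        ((segment_eq_Icc h.fst_le).subset (Prod.segment_subset u r hc).1).1, hc'⟩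
  obtain ⟨w, hw, hcw, hwz⟩ := h'.exists_mem_URHull_mem_Icc hA' hc huc hcz hzr (h.right_snd_le hz)
    fun hz' ↦ ⟨hz', fun q hq ↦ hz.1.2 q (hsub' hq)⟩
  exact ⟨w, hw, hec.trans hcw, hwz⟩

end IsTopRight

end UpperRight

section Reflection

/-- The reflection `(x, y) ↦ (± x, ± y)` that turns the quadrant with signs `σ`, `τ` into the
upper-right one. -/
def reflect (σ τ : ℤˣ) : (ℝ × ℝ) ≃ₗ[ℝ] (ℝ × ℝ) :=
  (DistribMulAction.toLinearEquiv ℝ ℝ σ).prodCongr (DistribMulAction.toLinearEquiv ℝ ℝ τ)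

/-- The quarter of the hull of `A` in the quadrant with signs `σ`, `τ`, starting at `v`; for
instance `quarterHull (-1) 1` is `ULHull`. -/
def quarterHull (σ τ : ℤˣ) (A : Set (ℝ × ℝ)) (v : ℝ × ℝ) : Set (ℝ × ℝ) :=
  reflect σ τ ⁻¹' URHull (reflect σ τ '' A) (reflect σ τ v)

/-- `x` is a strictly convex vertex of the quarter hull with signs `σ`, `τ`, which runs from the
extreme vertex `v` in the vertical direction to the extreme vertex `h` in the horizontal one. -/
def IsQuarterVertex (σ τ : ℤˣ) (A : Set (ℝ × ℝ)) (v h x : ℝ × ℝ) : Prop :=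
  SCV_UR (reflect σ τ '' A) (reflect σ τ v) (reflect σ τ h) (reflect σ τ x)

variable {A : Set (ℝ × ℝ)} {σ τ : ℤˣ} {l r u b v x : ℝ × ℝ}

lemma reflect_fst (σ τ : ℤˣ) (p : ℝ × ℝ) : (reflect σ τ p).1 = σ • p.1 := rfl

lemma reflect_snd (σ τ : ℤˣ) (p : ℝ × ℝ) : (reflect σ τ p).2 = τ • p.2 := rfl

lemma reflect_neg_neg (σ τ : ℤˣ) (p : ℝ × ℝ) : reflect (-σ) (-τ) p = -reflect σ τ p := by
  ext <;> simp [reflect_fst, reflect_snd, Units.neg_smul]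

lemma convexHull_image_reflect (σ τ : ℤˣ) (A : Set (ℝ × ℝ)) :
    convexHull ℝ (reflect σ τ '' A) = reflect σ τ '' convexHull ℝ A :=
  ((reflect σ τ).toLinearMap.image_convexHull A).symm

lemma reflect_mem_convexHull :
    reflect σ τ x ∈ convexHull ℝ (reflect σ τ '' A) ↔ x ∈ convexHull ℝ A := by
  rw [convexHull_image_reflect, (reflect σ τ).injective.mem_set_image]

lemma reflect_mem_extremePoints :
    reflect σ τ x ∈ (convexHull ℝ (reflect σ τ '' A)).extremePoints ℝ ↔
      x ∈ (convexHull ℝ A).extremePoints ℝ := by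
  rw [convexHull_image_reflect, ← image_extremePoints, (reflect σ τ).injective.mem_set_image]

lemma reflect_mem_upperHullS :
    reflect σ 1 x ∈ upperHullS (reflect σ 1 '' A) ↔ x ∈ upperHullS A := by
  simp only [upperHullS, mem_ofPred_eq, convexHull_image_reflect, forall_mem_image,
    (reflect σ 1).injective.mem_set_image, reflect_fst, reflect_snd, smul_left_cancel_iff, one_smul]

lemma reflect_mem_upperHullS_neg :
    reflect σ (-1) x ∈ upperHullS (reflect σ (-1) '' A) ↔ x ∈ lowerHullS A := by
  simp only [upperHullS, lowerHullS, mem_ofPred_eq, convexHull_image_reflect, forall_mem_image,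
    (reflect σ (-1)).injective.mem_set_image, reflect_fst, reflect_snd, smul_left_cancel_iff,
    Units.neg_smul, one_smul, neg_le_neg_iff]

lemma quarterHull_one_one : quarterHull 1 1 A v = URHull A v := by
  ext x
  simp [quarterHull, URHull, reflect_mem_upperHullS, reflect_fst]

lemma quarterHull_neg_one : quarterHull (-1) 1 A v = ULHull A v := by
  ext x
  simp [quarterHull, URHull, ULHull, reflect_mem_upperHullS, reflect_fst]

lemma quarterHull_one_neg : quarterHull 1 (-1) A v = LRHull A v := by
  ext x
  simp [quarterHull, URHull, LRHull, reflect_mem_upperHullS_neg, reflect_fst]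

lemma quarterHull_neg_neg : quarterHull (-1) (-1) A v = LLHull A v := by
  ext x
  simp [quarterHull, URHull, LLHull, reflect_mem_upperHullS_neg, reflect_fst]

lemma isQuarterVertex_one_one : IsQuarterVertex 1 1 A u r x ↔ SCV_UR A u r x := by
  simp [IsQuarterVertex, SCV_UR, reflect_mem_upperHullS, reflect_mem_extremePoints, reflect_fst]

lemma isQuarterVertex_neg_one : IsQuarterVertex (-1) 1 A u l x ↔ SCV_UL A l u x := by
  simp [IsQuarterVertex, SCV_UR, SCV_UL, reflect_mem_upperHullS, reflect_mem_extremePoints,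
    reflect_fst, and_comm]

lemma isQuarterVertex_one_neg : IsQuarterVertex 1 (-1) A b r x ↔ SCV_LR A b r x := by
  simp [IsQuarterVertex, SCV_UR, SCV_LR, reflect_mem_upperHullS_neg, reflect_mem_extremePoints,
    reflect_fst]

lemma isQuarterVertex_neg_neg : IsQuarterVertex (-1) (-1) A b l x ↔ SCV_LL A l b x := by
  simp [IsQuarterVertex, SCV_UR, SCV_LL, reflect_mem_upperHullS_neg, reflect_mem_extremePoints,
    reflect_fst, and_comm]

end Reflection

namespace HVSeg

variable {s : HVSeg} {w : ℝ × ℝ}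

/-- The endpoint of `s` in the direction `(-σ, -τ)`, that is, facing the interior of the hull when
`s` meets the quarter hull with signs `σ`, `τ`. -/
def innerEndpoint (s : HVSeg) (σ τ : ℤˣ) : ℝ × ℝ :=
  (if σ = 1 then s.p.1 else s.q.1, if τ = 1 then s.p.2 else s.q.2)

lemma carrier_eq_Icc (s : HVSeg) : s.carrier = Icc s.p s.q := by
  obtain ⟨⟨a, b⟩, ⟨c, d⟩, (⟨rfl : a = c, h : b ≤ d⟩ | ⟨rfl : b = d, h : a ≤ c⟩)⟩ := s
  · rw [carrier, ← Prod.image_mk_segment_right, segment_eq_Icc h, ← Icc_prod_Icc, Icc_self,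
      singleton_prod]
  · rw [carrier, ← Prod.image_mk_segment_left, segment_eq_Icc h, ← Icc_prod_Icc, Icc_self,
      prod_singleton]

lemma mem_carrier_iff_reflect (σ τ : ℤˣ) : w ∈ s.carrier ↔ reflect σ τ w ∈
    Icc (reflect σ τ (s.innerEndpoint σ τ)) (reflect σ τ (s.innerEndpoint (-σ) (-τ))) := by
  rw [carrier_eq_Icc]
  rcases Int.units_eq_one_or σ with rfl | rfl <;> rcases Int.units_eq_one_or τ with rfl | rfl <;>
    simp [reflect_fst, reflect_snd, innerEndpoint, Prod.le_def, and_assoc, and_left_comm, and_comm]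

lemma innerEndpoint_eq (s : HVSeg) (σ τ : ℤˣ) :
    (s.IsVert ∧ s.innerEndpoint σ τ = if τ = 1 then s.p else s.q) ∨
      (s.IsHoriz ∧ s.innerEndpoint σ τ = if σ = 1 then s.p else s.q) := by
  rcases s.hv with ⟨h, -⟩ | ⟨h, -⟩
  · refine .inl ⟨h, ?_⟩
    split_ifs with hτ <;> simp [innerEndpoint, hτ, h, Prod.ext_iff]
  · refine .inr ⟨h, ?_⟩
    split_ifs with hσ <;> simp [innerEndpoint, hσ, h, Prod.ext_iff]

lemma innerEndpoint_mem_carrier (s : HVSeg) (σ τ : ℤˣ) : s.innerEndpoint σ τ ∈ s.carrier := by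
  rcases s.innerEndpoint_eq σ τ with ⟨-, h⟩ | ⟨-, h⟩ <;> rw [h] <;> split_ifs
  exacts [left_mem_segment ℝ _ _, right_mem_segment ℝ _ _, left_mem_segment ℝ _ _,
    right_mem_segment ℝ _ _]

end HVSeg

section SupportingFunctional

lemma exists_forall_le_of_mem_extremePoints {E : Type*} [NormedAddCommGroup E] [NormedSpace ℝ E]
    [Nontrivial E] {S : Set E} (hS : S.Finite) {x : E}
    (hx : x ∈ (convexHull ℝ S).extremePoints ℝ) : ∃ f : E →L[ℝ] ℝ, f ≠ 0 ∧ ∀ p ∈ S, f p ≤ f x := by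
  by_cases hSx : S ⊆ {x}
  · obtain ⟨v, hv⟩ := exists_ne (0 : E)
    obtain ⟨f, hf⟩ := SeparatingDual.exists_ne_zero (R := ℝ) hv
    exact ⟨f, fun h ↦ hf (by simp [h]), fun p hp ↦ by rw [hSx hp]⟩
  have hxS : x ∉ convexHull ℝ (S \ {x}) := fun h ↦
    ((convex_convexHull ℝ S).mem_extremePoints_iff_mem_sdiff_convexHull_sdiff.1 hx).2 <|
      convexHull_mono (sdiff_subset_sdiff_left (subset_convexHull ℝ S)) h
  obtain ⟨f, c, hfc, hcx⟩ := geometric_hahn_banach_closed_point (convex_convexHull ℝ (S \ {x}))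
    (hS.sdiff.isClosed_convexHull ℝ) hxS
  have hlt (p : E) (hp : p ∈ S) (hpx : p ≠ x) : f p < f x :=
    (hfc p (subset_convexHull ℝ _ ⟨hp, hpx⟩)).trans hcx
  obtain ⟨p, hp, hpx⟩ := not_subset.1 hSx
  refine ⟨f, fun h ↦ (hlt p hp hpx).ne (by simp [h]), fun p hp ↦ ?_⟩
  rcases eq_or_ne p x with rfl | hpx
  exacts [le_rfl, (hlt p hp hpx).le]

lemma weaklyConvexPos_of_forall_exists_linearMap {Q : Set (ℝ × ℝ)}
    (h : ∀ q ∈ Q, ∃ f : (ℝ × ℝ) →ₗ[ℝ] ℝ, f ≠ 0 ∧ ∀ p ∈ Q, f p ≤ f q) : WeaklyConvexPos Q := by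
  intro q hq
  obtain ⟨f, hf, hfq⟩ := h q hq
  have hf' (p : ℝ × ℝ) : f (1, 0) * p.1 + f (0, 1) * p.2 = f p := by
    conv_rhs =>
      rw [show p = p.1 • (1, 0) + p.2 • (0, 1) by ext <;> simp, map_add, map_smul, map_smul]
    simp only [smul_eq_mul]
    ring
  refine ⟨(f (1, 0), f (0, 1)), f q, fun h0 ↦ hf ?_, fun p hp ↦ (hf' p).trans_le (hfq p hp), hf' q⟩
  rw [Prod.mk_eq_zero] at h0
  exact LinearMap.ext fun p ↦ by rw [← hf' p, h0.1, h0.2]; simp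

end SupportingFunctional

/-- Points of `S \ F` are assigned a segment that meets `S` nowhere else, so that only the
assignment on `F` can fail to be injective. -/
lemma exists_CPT_of_private_segments {R : Finset HVSeg} {S F : Set (ℝ × ℝ)} (hS : S.Finite)
    (hpos : WeaklyConvexPos S) {f : ℝ × ℝ → HVSeg} (hfR : ∀ q ∈ F, f q ∈ R) (hf : InjOn f F)
    (hqf : ∀ q ∈ F, q ∈ (f q).carrier)
    (hprivate : ∀ q ∈ S \ F, ∃ s ∈ R, q ∈ s.carrier ∧ ∀ w ∈ S, w ∈ s.carrier → w = q) :
    ∃ T : CPT R, (T.Q : Set (ℝ × ℝ)) = S := by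
  have hassign (q : ℝ × ℝ) (hq : q ∈ S) : ∃ s ∈ R, q ∈ s.carrier ∧ (q ∈ F → s = f q) ∧
      (q ∉ F → ∀ w ∈ S, w ∈ s.carrier → w = q) := by
    by_cases hqF : q ∈ F
    · exact ⟨f q, hfR q hqF, hqf q hqF, fun _ ↦ rfl, fun h ↦ absurd hqF h⟩
    · obtain ⟨s, hs, hqs, hsq⟩ := hprivate q ⟨hq, hqF⟩
      exact ⟨s, hs, hqs, fun h ↦ absurd h hqF, fun _ ↦ hsq⟩
  have : Nonempty HVSeg := ⟨f 0⟩
  choose! g hgR hqg hgF hg using hassign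
  have hg_inj : InjOn g S := by
    intro q hq q' hq' hqq'
    by_cases hqF : q ∈ F
    · by_cases hqF' : q' ∈ F
      · exact hf hqF hqF' (by rw [← hgF q hq hqF, hqq', hgF q' hq' hqF'])
      · exact hg q' hq' hqF' q hq (hqq' ▸ hqg q hq)
    · exact (hg q hq hqF q' hq' (hqq' ▸ hqg q' hq')).symm
  exact ⟨⟨hS.toFinset, g, by rwa [hS.coe_toFinset], by simpa using hgR, by rwa [hS.coe_toFinset],
    by simpa using hqg⟩, hS.coe_toFinset⟩

/-- `H 1`, `H (-1)`, `V 1` and `V (-1)` are a rightmost, a leftmost, a topmost and a bottommost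
point of `A`. -/
structure IsFrame (A : Set (ℝ × ℝ)) (H V : ℤˣ → ℝ × ℝ) : Prop where
  horiz_mem : ∀ σ, H σ ∈ A
  vert_mem : ∀ τ, V τ ∈ A
  le_horiz : ∀ σ, ∀ q ∈ A, σ • q.1 ≤ σ • (H σ).1
  le_vert : ∀ τ, ∀ q ∈ A, τ • q.2 ≤ τ • (V τ).2

/-- `x` lies outside the chord from `V τ` to `H σ`, on the side of the quadrant with signs `σ`,
`τ`. -/
def IsBeyond (H V : ℤˣ → ℝ × ℝ) (σ τ : ℤˣ) (x : ℝ × ℝ) : Prop :=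
  0 < cross (reflect σ τ (V τ)) (reflect σ τ (H σ)) (reflect σ τ x)

section Frame

variable {A A' : Set (ℝ × ℝ)} {H V : ℤˣ → ℝ × ℝ} {σ σ' τ τ' : ℤˣ} {w x : ℝ × ℝ} {s : HVSeg}

namespace IsFrame

lemma isTopRight (h : IsFrame A H V) (σ τ : ℤˣ) :
    IsTopRight (reflect σ τ '' A) (reflect σ τ (V τ)) (reflect σ τ (H σ)) where
  top_mem := mem_image_of_mem _ (h.vert_mem τ)
  right_mem := mem_image_of_mem _ (h.horiz_mem σ)
  le_top := forall_mem_image.2 (h.le_vert τ)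
  le_right := forall_mem_image.2 (h.le_horiz σ)

protected lemma convexHull (h : IsFrame A H V) : IsFrame (convexHull ℝ A) H V where
  horiz_mem := fun σ ↦ subset_convexHull ℝ A (h.horiz_mem σ)
  vert_mem := fun τ ↦ subset_convexHull ℝ A (h.vert_mem τ)
  le_horiz := fun σ _ hq ↦
    (h.isTopRight σ 1).convexHull.le_right _ (reflect_mem_convexHull.2 hq)
  le_vert := fun τ _ hq ↦ (h.isTopRight 1 τ).convexHull.le_top _ (reflect_mem_convexHull.2 hq)

lemma mono (h : IsFrame A H V) (hA : A' ⊆ A) (hHV : range H ∪ range V ⊆ A') : IsFrame A' H V where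
  horiz_mem := fun σ ↦ hHV (.inl (mem_range_self σ))
  vert_mem := fun τ ↦ hHV (.inr (mem_range_self τ))
  le_horiz := fun σ q hq ↦ h.le_horiz σ q (hA hq)
  le_vert := fun τ q hq ↦ h.le_vert τ q (hA hq)

lemma horiz_neg_le (h : IsFrame A H V) (hx : x ∈ A) (σ : ℤˣ) : σ • (H (-σ)).1 ≤ σ • x.1 := by
  simpa only [Units.neg_smul, neg_le_neg_iff] using h.le_horiz (-σ) x hx

lemma vert_neg_le (h : IsFrame A H V) (hx : x ∈ A) (τ : ℤˣ) : τ • (V (-τ)).2 ≤ τ • x.2 := by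
  simpa only [Units.neg_smul, neg_le_neg_iff] using h.le_vert (-τ) x hx

lemma vert_fst_lt (h : IsFrame A H V) (hx : x ∈ A) (hb : IsBeyond H V σ τ x) :
    σ • (V τ).1 < σ • x.1 :=
  fst_lt_of_cross_pos (h.isTopRight σ τ).fst_le (h.isTopRight σ τ).snd_le (h.le_vert τ x hx) hb

lemma horiz_snd_lt (h : IsFrame A H V) (hx : x ∈ A) (hb : IsBeyond H V σ τ x) :
    τ • (H σ).2 < τ • x.2 :=
  snd_lt_of_cross_pos (h.isTopRight σ τ).fst_le (h.isTopRight σ τ).snd_le (h.le_horiz σ x hx) hb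

lemma not_isBeyond_horiz (h : IsFrame A H V) : ¬ IsBeyond H V σ τ (H σ') := by
  intro hb
  rcases eq_or_ne σ' σ with rfl | hσ
  · exact hb.ne' (cross_right _ _)
  · obtain rfl := Int.units_ne_iff_eq_neg.1 hσ
    exact (h.vert_fst_lt (h.horiz_mem _) hb).not_ge (h.horiz_neg_le (h.vert_mem τ) σ)

lemma not_isBeyond_vert (h : IsFrame A H V) : ¬ IsBeyond H V σ τ (V τ') := by
  intro hb
  rcases eq_or_ne τ' τ with rfl | hτ
  · exact hb.ne' (cross_left _ _)
  · obtain rfl := Int.units_ne_iff_eq_neg.1 hτ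
    exact (h.horiz_snd_lt (h.vert_mem _) hb).not_ge (h.vert_neg_le (h.horiz_mem σ) τ)

lemma not_isBeyond_neg_neg (h : IsFrame A H V) (hx : x ∈ A) (hb : IsBeyond H V σ τ x) :
    ¬ IsBeyond H V (-σ) (-τ) x := by
  simp only [IsBeyond, reflect_neg_neg, cross_neg, not_lt]
  exact cross_opposite_nonpos (u := reflect σ τ (V τ)) (r := reflect σ τ (H σ))
    (h.horiz_neg_le (h.vert_mem _) σ) (h.vert_neg_le (h.horiz_mem _) τ)
    ⟨h.horiz_neg_le (h.vert_mem τ) σ, h.le_vert τ _ (h.horiz_mem _)⟩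
    ⟨h.le_horiz σ _ (h.vert_mem _), h.vert_neg_le (h.horiz_mem σ) τ⟩
    (h.vert_fst_lt hx hb) (h.le_horiz σ x hx) hb.le

lemma eq_and_eq_of_isBeyond (h : IsFrame A H V) (hx : x ∈ A) (hb : IsBeyond H V σ τ x)
    (hb' : IsBeyond H V σ' τ' x) : σ' = σ ∧ τ' = τ := by
  by_contra! hne
  rcases eq_or_ne σ' σ with rfl | hσ <;> rcases eq_or_ne τ' τ with rfl | hτ
  · exact hne rfl rfl
  · obtain rfl := Int.units_ne_iff_eq_neg.1 hτ
    have := h.horiz_snd_lt hx hb'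
    simp only [Units.neg_smul, neg_lt_neg_iff] at this
    exact this.not_gt (h.horiz_snd_lt hx hb)
  · obtain rfl := Int.units_ne_iff_eq_neg.1 hσ
    have := h.vert_fst_lt hx hb'
    simp only [Units.neg_smul, neg_lt_neg_iff] at this
    exact this.not_gt (h.vert_fst_lt hx hb)
  · obtain rfl := Int.units_ne_iff_eq_neg.1 hσ
    obtain rfl := Int.units_ne_iff_eq_neg.1 hτ
    exact h.not_isBeyond_neg_neg hx hb hb'

lemma isBeyond_of_isQuarterVertex (h : IsFrame A H V)
    (hx : IsQuarterVertex σ τ A (V τ) (H σ) x) : IsBeyond H V σ τ x :=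
  (h.isTopRight σ τ).cross_pos_of_SCV_UR hx

lemma eq_of_mem_carrier (h : IsFrame A H V)
    (he : s.innerEndpoint σ τ ∈ (convexHull ℝ A).extremePoints ℝ)
    (hb : IsBeyond H V σ τ (s.innerEndpoint σ τ)) (hw : w ∈ convexHull ℝ A) (hws : w ∈ s.carrier) :
    w = s.innerEndpoint σ τ :=
  (reflect σ τ).injective <| (h.isTopRight σ τ).eq_of_mem_extremePoints
    (reflect_mem_extremePoints.2 he) hb (reflect_mem_convexHull.2 hw)
    ((HVSeg.mem_carrier_iff_reflect σ τ).1 hws).1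

lemma quarterHull_inter_carrier_nonempty (h : IsFrame A H V) (h' : IsFrame A' H V)
    (hA' : A'.Finite) (hsub : A' ⊆ convexHull ℝ A)
    (hs : s.innerEndpoint σ τ ∈ convexHull ℝ A → IsBeyond H V σ τ (s.innerEndpoint σ τ) →
      s.innerEndpoint σ τ ∈ convexHull ℝ A')
    (hmeet : (quarterHull σ τ A (V τ) ∩ s.carrier).Nonempty) :
    (quarterHull σ τ A' (V τ) ∩ s.carrier).Nonempty := by
  obtain ⟨z, hz, hzs⟩ := hmeet
  rw [HVSeg.mem_carrier_iff_reflect σ τ] at hzs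
  obtain ⟨w, hw, hew, hwz⟩ := (h.isTopRight σ τ).exists_mem_URHull_mem_Icc_of_subset
    (h'.isTopRight σ τ) (by rw [convexHull_image_reflect]; exact image_mono hsub)
    ((hA'.image _).isCompact_convexHull ℝ) hz hzs.1
    (by simpa only [reflect_mem_convexHull, IsBeyond] using hs)
  obtain ⟨w, rfl⟩ := (reflect σ τ).surjective w
  exact ⟨w, hw, (HVSeg.mem_carrier_iff_reflect σ τ).2 ⟨hew, hwz.trans hzs.2⟩⟩

end IsFrame

end Frame

/-- The endpoints by which the quarter hull with signs `σ`, `τ` is replaced: the inner endpoints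
that lie in the hull of `A` beyond the chord of that quarter. -/
def endpointsBeyond (R : Finset HVSeg) (A : Set (ℝ × ℝ)) (H V : ℤˣ → ℝ × ℝ) (σ τ : ℤˣ) :
    Set (ℝ × ℝ) :=
  {e ∈ (fun s : HVSeg ↦ s.innerEndpoint σ τ) '' R | e ∈ convexHull ℝ A ∧ IsBeyond H V σ τ e}

/-- The points spanning the hull of the canonical transversal: the four extreme vertices together
with the endpoints beyond the four chords. -/
def canonicalPoints (R : Finset HVSeg) (A : Set (ℝ × ℝ)) (H V : ℤˣ → ℝ × ℝ) : Set (ℝ × ℝ) :=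
  range H ∪ range V ∪ ⋃ σ, ⋃ τ, endpointsBeyond R A H V σ τ

/-- The canonical transversal: the vertices of the hull of `canonicalPoints`, and the four extreme
vertices, which need not be vertices of that hull. -/
def canonicalVertices (R : Finset HVSeg) (A : Set (ℝ × ℝ)) (H V : ℤˣ → ℝ × ℝ) : Set (ℝ × ℝ) :=
  range H ∪ range V ∪ (convexHull ℝ (canonicalPoints R A H V)).extremePoints ℝ

section Canonical

variable {R : Finset HVSeg} {A : Set (ℝ × ℝ)} {H V : ℤˣ → ℝ × ℝ} {σ τ : ℤˣ} {x : ℝ × ℝ}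

lemma finite_canonicalPoints : (canonicalPoints R A H V).Finite :=
  ((finite_range H).union (finite_range V)).union <| finite_iUnion fun _ ↦ finite_iUnion fun _ ↦
    (R.finite_toSet.image _).sep _

lemma canonicalVertices_subset : canonicalVertices R A H V ⊆ canonicalPoints R A H V :=
  union_subset subset_union_left extremePoints_convexHull_subset

lemma finite_canonicalVertices : (canonicalVertices R A H V).Finite :=
  finite_canonicalPoints.subset canonicalVertices_subset

lemma convexHull_canonicalVertices :
    convexHull ℝ (canonicalVertices R A H V) = convexHull ℝ (canonicalPoints R A H V) := by
  refine (convexHull_mono canonicalVertices_subset).antisymm ?_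
  rw [← closure_convexHull_extremePoints (finite_canonicalPoints.isCompact_convexHull ℝ)
    (convex_convexHull ℝ _)]
  exact closure_minimal (convexHull_mono subset_union_right)
    (finite_canonicalVertices.isClosed_convexHull ℝ)

lemma exists_isVert_or_isHoriz_of_mem_endpointsBeyond (hx : x ∈ endpointsBeyond R A H V σ τ) :
    (∃ s ∈ R, s.IsVert ∧ x = if τ = 1 then s.p else s.q) ∨
      ∃ s ∈ R, s.IsHoriz ∧ x = if σ = 1 then s.p else s.q := by
  obtain ⟨⟨s, hs, rfl⟩, -⟩ := hx
  exact (s.innerEndpoint_eq σ τ).imp (fun h ↦ ⟨s, hs, h⟩) fun h ↦ ⟨s, hs, h⟩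

namespace IsFrame

variable (R) in
lemma canonicalPoints_subset (h : IsFrame A H V) : canonicalPoints R A H V ⊆ convexHull ℝ A := by
  refine union_subset (union_subset (range_subset_iff.2 h.convexHull.horiz_mem)
    (range_subset_iff.2 h.convexHull.vert_mem)) ?_
  exact iUnion₂_subset fun σ τ e he ↦ he.2.1

variable (R) in
lemma isFrame_canonicalVertices (h : IsFrame A H V) : IsFrame (canonicalVertices R A H V) H V :=
  h.convexHull.mono (canonicalVertices_subset.trans (h.canonicalPoints_subset R))
    subset_union_left

lemma weaklyConvexPos_canonicalVertices (h : IsFrame A H V) :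
    WeaklyConvexPos (canonicalVertices R A H V) := by
  have h' := h.isFrame_canonicalVertices R
  refine weaklyConvexPos_of_forall_exists_linearMap ?_
  rintro _ ((⟨σ, rfl⟩ | ⟨τ, rfl⟩) | hq)
  · refine ⟨σ • LinearMap.fst ℝ ℝ ℝ, ?_, h'.le_horiz σ⟩
    exact fun h0 ↦ by simpa [smul_eq_zero_iff_eq] using DFunLike.congr_fun h0 (1, 0)
  · refine ⟨τ • LinearMap.snd ℝ ℝ ℝ, ?_, h'.le_vert τ⟩
    exact fun h0 ↦ by simpa [smul_eq_zero_iff_eq] using DFunLike.congr_fun h0 (0, 1)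
  · rw [← convexHull_canonicalVertices] at hq
    obtain ⟨f, hf, hfq⟩ := exists_forall_le_of_mem_extremePoints finite_canonicalVertices hq
    exact ⟨f, fun h0 ↦ hf (ContinuousLinearMap.coe_injective h0), hfq⟩

lemma quarterHull_canonicalVertices_inter_nonempty (h : IsFrame A H V) {s : HVSeg} (hs : s ∈ R)
    (hmeet : (quarterHull σ τ A (V τ) ∩ s.carrier).Nonempty) :
    (quarterHull σ τ (canonicalVertices R A H V) (V τ) ∩ s.carrier).Nonempty := by
  refine h.quarterHull_inter_carrier_nonempty (h.isFrame_canonicalVertices R)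
    finite_canonicalVertices (canonicalVertices_subset.trans (h.canonicalPoints_subset R))
    (fun hsA hb ↦ ?_) hmeet
  rw [convexHull_canonicalVertices]
  exact subset_convexHull ℝ _ (.inr (mem_iUnion₂.2 ⟨σ, τ, mem_image_of_mem _ hs, hsA, hb⟩))

lemma mem_endpointsBeyond_of_isQuarterVertex (h : IsFrame A H V)
    (hx : IsQuarterVertex σ τ (canonicalVertices R A H V) (V τ) (H σ) x) :
    x ∈ endpointsBeyond R A H V σ τ := by
  have hb := (h.isFrame_canonicalVertices R).isBeyond_of_isQuarterVertex hx
  have hxP := canonicalVertices_subset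
    (extremePoints_convexHull_subset (reflect_mem_extremePoints.1 hx.2.1))
  rcases hxP with (⟨σ', rfl⟩ | ⟨τ', rfl⟩) | hxE
  · exact absurd hb h.not_isBeyond_horiz
  · exact absurd hb h.not_isBeyond_vert
  · obtain ⟨σ', τ', hxE⟩ := mem_iUnion₂.1 hxE
    obtain ⟨rfl, rfl⟩ := h.convexHull.eq_and_eq_of_isBeyond hxE.2.1 hb hxE.2.2
    exact hxE

lemma exists_private_segment (h : IsFrame A H V)
    (hx : x ∈ canonicalVertices R A H V \ (range H ∪ range V)) :
    ∃ s ∈ R, x ∈ s.carrier ∧ ∀ w ∈ canonicalVertices R A H V, w ∈ s.carrier → w = x := by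
  obtain ⟨hxHV | hx, hxHV'⟩ := hx
  · exact absurd hxHV hxHV'
  obtain ⟨σ, τ, ⟨s, hs, rfl⟩, -, hb⟩ :=
    mem_iUnion₂.1 ((extremePoints_convexHull_subset hx).resolve_left hxHV')
  rw [← convexHull_canonicalVertices] at hx
  exact ⟨s, hs, s.innerEndpoint_mem_carrier σ τ, fun w hw hws ↦
    (h.isFrame_canonicalVertices R).eq_of_mem_carrier hx hb (subset_convexHull ℝ _ hw) hws⟩

theorem exists_canonical_CPT (h : IsFrame A H V) {f : ℝ × ℝ → HVSeg}
    (hfR : ∀ q ∈ range H ∪ range V, f q ∈ R) (hf : InjOn f (range H ∪ range V))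
    (hqf : ∀ q ∈ range H ∪ range V, q ∈ (f q).carrier) :
    ∃ T : CPT R, IsFrame ↑T.Q H V ∧
      (∀ σ τ, ∀ s ∈ R, (quarterHull σ τ A (V τ) ∩ s.carrier).Nonempty →
        (quarterHull σ τ ↑T.Q (V τ) ∩ s.carrier).Nonempty) ∧
      ∀ σ τ x, IsQuarterVertex σ τ ↑T.Q (V τ) (H σ) x →
        (∃ s ∈ R, s.IsVert ∧ x = if τ = 1 then s.p else s.q) ∨
          ∃ s ∈ R, s.IsHoriz ∧ x = if σ = 1 then s.p else s.q := by
  obtain ⟨T, hT⟩ := exists_CPT_of_private_segments finite_canonicalVertices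
    h.weaklyConvexPos_canonicalVertices hfR hf hqf fun _ ↦ h.exists_private_segment
  refine ⟨T, hT ▸ h.isFrame_canonicalVertices R, fun σ τ s hs hmeet ↦ ?_, fun σ τ x hx ↦ ?_⟩
  · rw [hT]
    exact h.quarterHull_canonicalVertices_inter_nonempty hs hmeet
  · rw [hT] at hx
    exact exists_isVert_or_isHoriz_of_mem_endpointsBeyond
      (h.mem_endpointsBeyond_of_isQuarterVertex hx)

end IsFrame

end Canonical

lemma range_ite_units {α : Type*} (x y : α) :
    range (fun σ : ℤˣ ↦ if σ = 1 then x else y) = {x, y} := by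
  refine Subset.antisymm (range_subset_iff.2 fun σ ↦ ?_) (pair_subset ⟨1, by simp⟩ ⟨-1, by simp⟩)
  split_ifs <;> simp

lemma isFrame_ite_iff {A : Set (ℝ × ℝ)} {l r u b : ℝ × ℝ} :
    IsFrame A (fun σ ↦ if σ = 1 then r else l) (fun τ ↦ if τ = 1 then u else b) ↔
      (l ∈ A ∧ ∀ q ∈ A, l.1 ≤ q.1) ∧ (r ∈ A ∧ ∀ q ∈ A, q.1 ≤ r.1) ∧
      (u ∈ A ∧ ∀ q ∈ A, q.2 ≤ u.2) ∧ (b ∈ A ∧ ∀ q ∈ A, b.2 ≤ q.2) := by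
  constructor
  · refine fun h ↦ ⟨⟨?_, ?_⟩, ⟨?_, ?_⟩, ⟨?_, ?_⟩, ?_, ?_⟩
    · simpa using h.horiz_mem (-1)
    · simpa using h.le_horiz (-1)
    · simpa using h.horiz_mem 1
    · simpa using h.le_horiz 1
    · simpa using h.vert_mem 1
    · simpa using h.le_vert 1
    · simpa using h.vert_mem (-1)
    · simpa using h.le_vert (-1)
  · rintro ⟨⟨hl, hl'⟩, ⟨hr, hr'⟩, ⟨hu, hu'⟩, hb, hb'⟩
    constructor <;> intro σ <;> rcases Int.units_eq_one_or σ with rfl | rfl <;>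
      simpa [-Prod.forall] using by assumption

theorem two_oriented_cpt_canonical_general (R : Finset HVSeg) (A : Set (ℝ × ℝ)) (l r u b : ℝ × ℝ)
    (hl : l ∈ A ∧ ∀ q ∈ A, l.1 ≤ q.1) (hr : r ∈ A ∧ ∀ q ∈ A, q.1 ≤ r.1)
    (hu : u ∈ A ∧ ∀ q ∈ A, q.2 ≤ u.2) (hb : b ∈ A ∧ ∀ q ∈ A, b.2 ≤ q.2)
    (f : ℝ × ℝ → HVSeg) (hfR : ∀ q ∈ ({l, r, u, b} : Set (ℝ × ℝ)), f q ∈ R)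
    (hf : InjOn f {l, r, u, b}) (hqf : ∀ q ∈ ({l, r, u, b} : Set (ℝ × ℝ)), q ∈ (f q).carrier) :
    ∃ T' : CPT R,
      (l ∈ T'.Q ∧ ∀ q ∈ T'.Q, l.1 ≤ q.1) ∧
      (r ∈ T'.Q ∧ ∀ q ∈ T'.Q, q.1 ≤ r.1) ∧
      (u ∈ T'.Q ∧ ∀ q ∈ T'.Q, q.2 ≤ u.2) ∧
      (b ∈ T'.Q ∧ ∀ q ∈ T'.Q, b.2 ≤ q.2) ∧
      (∀ s ∈ R, (ULHull A u ∩ s.carrier).Nonempty → (ULHull ↑T'.Q u ∩ s.carrier).Nonempty) ∧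
      (∀ s ∈ R, (URHull A u ∩ s.carrier).Nonempty → (URHull ↑T'.Q u ∩ s.carrier).Nonempty) ∧
      (∀ s ∈ R, (LLHull A b ∩ s.carrier).Nonempty → (LLHull ↑T'.Q b ∩ s.carrier).Nonempty) ∧
      (∀ s ∈ R, (LRHull A b ∩ s.carrier).Nonempty → (LRHull ↑T'.Q b ∩ s.carrier).Nonempty) ∧
      (∀ x, SCV_UL ↑T'.Q l u x →
        (∃ s ∈ R, s.IsVert ∧ x = s.p) ∨ (∃ s ∈ R, s.IsHoriz ∧ x = s.q)) ∧
      (∀ x, SCV_UR ↑T'.Q u r x →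
        (∃ s ∈ R, s.IsVert ∧ x = s.p) ∨ (∃ s ∈ R, s.IsHoriz ∧ x = s.p)) ∧
      (∀ x, SCV_LL ↑T'.Q l b x →
        (∃ s ∈ R, s.IsVert ∧ x = s.q) ∨ (∃ s ∈ R, s.IsHoriz ∧ x = s.q)) ∧
      (∀ x, SCV_LR ↑T'.Q b r x →
        (∃ s ∈ R, s.IsVert ∧ x = s.q) ∨ (∃ s ∈ R, s.IsHoriz ∧ x = s.p)) := by
  have hHV : range (fun σ : ℤˣ ↦ if σ = 1 then r else l) ∪
      range (fun τ : ℤˣ ↦ if τ = 1 then u else b) = {l, r, u, b} := by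
    rw [range_ite_units, range_ite_units, pair_comm r l, insert_union, singleton_union]
  rw [← hHV] at hf hfR hqf
  obtain ⟨T, hT, hmeet, hvertex⟩ :=
    (isFrame_ite_iff.2 ⟨hl, hr, hu, hb⟩).exists_canonical_CPT hfR hf hqf
  obtain ⟨hl', hr', hu', hb'⟩ := isFrame_ite_iff.1 hT
  refine ⟨T, hl', hr', hu', hb', ?_, ?_, ?_, ?_, fun x hx ↦ ?_, fun x hx ↦ ?_, fun x hx ↦ ?_,
    fun x hx ↦ ?_⟩
  · simpa [quarterHull_neg_one] using hmeet (-1) 1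
  · simpa [quarterHull_one_one] using hmeet 1 1
  · simpa [quarterHull_neg_neg] using hmeet (-1) (-1)
  · simpa [quarterHull_one_neg] using hmeet 1 (-1)
  · simpa using hvertex (-1) 1 x (isQuarterVertex_neg_one.2 hx)
  · simpa using hvertex 1 1 x (isQuarterVertex_one_one.2 hx)
  · simpa using hvertex (-1) (-1) x (isQuarterVertex_neg_neg.2 hx)
  · simpa using hvertex 1 (-1) x (isQuarterVertex_one_neg.2 hx)

/-- canonicalization of a convex partial transversal of a family of
pairwise disjoint horizontal and vertical segments in general position, with the
same four extreme vertices, hull-quarter-wise containment of the met segments,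
and strictly convex vertices of each quarter hull on the appropriate segment
endpoints. -/
theorem two_oriented_cpt_canonical
    (R : Finset HVSeg)
    (hgen : GenPos R)
    (hdisj : ∀ s ∈ R, ∀ t ∈ R, s ≠ t → s.carrier ∩ t.carrier = ∅)
    (T : CPT R) (l r u b : ℝ × ℝ)
    (hl : l ∈ T.Q ∧ ∀ q ∈ T.Q, l.1 ≤ q.1)
    (hr : r ∈ T.Q ∧ ∀ q ∈ T.Q, q.1 ≤ r.1)
    (hu : u ∈ T.Q ∧ ∀ q ∈ T.Q, q.2 ≤ u.2)
    (hb : b ∈ T.Q ∧ ∀ q ∈ T.Q, b.2 ≤ q.2) :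
    ∃ T' : CPT R,
      (l ∈ T'.Q ∧ ∀ q ∈ T'.Q, l.1 ≤ q.1) ∧
      (r ∈ T'.Q ∧ ∀ q ∈ T'.Q, q.1 ≤ r.1) ∧
      (u ∈ T'.Q ∧ ∀ q ∈ T'.Q, q.2 ≤ u.2) ∧
      (b ∈ T'.Q ∧ ∀ q ∈ T'.Q, b.2 ≤ q.2) ∧
      (∀ s ∈ R, (ULHull ↑T.Q u ∩ s.carrier).Nonempty → (ULHull ↑T'.Q u ∩ s.carrier).Nonempty) ∧
      (∀ s ∈ R, (URHull ↑T.Q u ∩ s.carrier).Nonempty → (URHull ↑T'.Q u ∩ s.carrier).Nonempty) ∧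
      (∀ s ∈ R, (LLHull ↑T.Q b ∩ s.carrier).Nonempty → (LLHull ↑T'.Q b ∩ s.carrier).Nonempty) ∧
      (∀ s ∈ R, (LRHull ↑T.Q b ∩ s.carrier).Nonempty → (LRHull ↑T'.Q b ∩ s.carrier).Nonempty) ∧
      (∀ x, SCV_UL ↑T'.Q l u x →
        (∃ s ∈ R, s.IsVert ∧ x = s.p) ∨ (∃ s ∈ R, s.IsHoriz ∧ x = s.q)) ∧
      (∀ x, SCV_UR ↑T'.Q u r x →
        (∃ s ∈ R, s.IsVert ∧ x = s.p) ∨ (∃ s ∈ R, s.IsHoriz ∧ x = s.p)) ∧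
      (∀ x, SCV_LL ↑T'.Q l b x →
        (∃ s ∈ R, s.IsVert ∧ x = s.q) ∨ (∃ s ∈ R, s.IsHoriz ∧ x = s.q)) ∧
      (∀ x, SCV_LR ↑T'.Q b r x →
        (∃ s ∈ R, s.IsVert ∧ x = s.q) ∨ (∃ s ∈ R, s.IsHoriz ∧ x = s.p)) := by
  have hF : ({l, r, u, b} : Set (ℝ × ℝ)) ⊆ T.Q := by
    simp [insert_subset_iff, hl.1, hr.1, hu.1, hb.1]
  exact two_oriented_cpt_canonical_general R T.Q l r u b hl hr hu hb T.f
    (fun q hq ↦ T.f_mem q (hF hq)) (T.f_inj.mono hF) fun q hq ↦ T.q_mem q (hF hq)
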